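/- arXiv:2502.17707 — 2 statements merged into one kernel-verified Lean document; each statement's English description precedes it below -/
import Mathlib

section
/- Let M be an n-manifold, x ∈ M, and U a weakly sorted open Hausdorff subset of M with x ∈ U. Suppose that for every y ∈ NH(x) there exists a continuous map h : M → M such that h(y) = x and the restriction of h to {x} ∪ NH(x) is injective. Then NH(x) is a discrete subset of M. -/
open Set Topology TopologicalSpace

universe u

/-- Two points are inseparable (`x ⋈ y`): distinct, and every open set containing
one meets every open set containing the other. -/
def Bump {X : Type u} [TopologicalSpace X] (x y : X) : Prop :=
  x ≠ y ∧ ∀ U V : Set X, IsOpen U → IsOpen V → x ∈ U → y ∈ V → (U ∩ V).Nonempty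

/-- `NH A` = points inseparable from some point of `A`. -/
def NH {X : Type u} [TopologicalSpace X] (A : Set X) : Set X :=
  {y | ∃ x ∈ A, Bump y x}

/-- `NHpt x = NH {x}`. -/
def NHpt {X : Type u} [TopologicalSpace X] (x : X) : Set X := NH {x}

/-- An Euclidean subset: open and homeomorphic to ℝⁿ. -/
def IsEuclidean {X : Type u} [TopologicalSpace X] (n : ℕ) (U : Set X) : Prop :=
  IsOpen U ∧ Nonempty (U ≃ₜ EuclideanSpace ℝ (Fin n))

/-- An `n`-manifold: nonempty connected space, every point has an open
neighborhood homeomorphic to ℝⁿ (Hausdorffness NOT assumed). -/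
def IsNManifold (X : Type u) [TopologicalSpace X] (n : ℕ) : Prop :=
  ConnectedSpace X ∧ ∀ x : X, ∃ U : Set X, x ∈ U ∧ IsEuclidean n U

/-- Locally Hausdorff space. -/
def LocallyHausdorff (X : Type u) [TopologicalSpace X] : Prop :=
  ∀ x : X, ∃ U : Set X, IsOpen U ∧ x ∈ U ∧ T2Space U

/-- Quasi-countably-compact subset: every countable open cover has a finite subcover. -/
def QuasiCountablyCompact {X : Type u} [TopologicalSpace X] (K : Set X) : Prop :=
  ∀ U : ℕ → Set X, (∀ n, IsOpen (U n)) → K ⊆ ⋃ n, U n →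
    ∃ s : Finset ℕ, K ⊆ ⋃ n ∈ s, U n

/-- `A` is `κ`-Baire in `X`: not covered by fewer than `κ` nowhere dense sets. -/
def KappaBaire {X : Type u} [TopologicalSpace X] (κ : Cardinal.{u}) (A : Set X) : Prop :=
  ∀ (ι : Type u) (F : ι → Set X), Cardinal.mk ι < κ →
    (∀ i, IsNowhereDense (F i)) → ¬ A ⊆ ⋃ i, F i

/-- `S` is a scan of `A` in `X`. -/
def IsScan {X : Type u} [TopologicalSpace X] (S A : Set X) : Prop :=
  S ⊆ NH A ∧ ∀ x ∈ A, ((NHpt x).Nonempty ↔ (NHpt x ∩ S).Nonempty)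

/-- `U` is sorted: a continuous map from `closure U` to a Hausdorff space,
injective on `U`. -/
def IsSorted {X : Type u} [TopologicalSpace X] (U : Set X) : Prop :=
  ∃ (H : Type u) (tH : TopologicalSpace H) (f : closure U → H),
    @T2Space H tH ∧ @Continuous _ H _ tH f ∧
      ∀ a b : closure U, (a : X) ∈ U → (b : X) ∈ U → f a = f b → a = b

/-- `U` is weakly sorted: a continuous map from `closure U` to a Hausdorff space,
finite-to-one on `U`. -/
def IsWeaklySorted {X : Type u} [TopologicalSpace X] (U : Set X) : Prop :=
  ∃ (H : Type u) (tH : TopologicalSpace H) (f : closure U → H),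
    @T2Space H tH ∧ @Continuous _ H _ tH f ∧
      ∀ h : H, {a : closure U | (a : X) ∈ U ∧ f a = h}.Finite

/-- H-maximal: open Hausdorff, with no open Hausdorff proper superset. -/
def IsHMaximal {X : Type u} [TopologicalSpace X] (U : Set X) : Prop :=
  IsOpen U ∧ T2Space U ∧
    ∀ V : Set X, IsOpen V → T2Space V → U ⊆ V → V = U

/-- CH-maximal: connected open Hausdorff, with no connected open Hausdorff
proper superset. -/
def IsCHMaximal {X : Type u} [TopologicalSpace X] (U : Set X) : Prop :=
  IsConnected U ∧ IsOpen U ∧ T2Space U ∧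
    ∀ V : Set X, IsConnected V → IsOpen V → T2Space V → U ⊆ V → V = U

/-- `U` is f-simple at `p`: every open `V ∋ p` contains an open `W ∋ p` such that
`W ∩ U` has finitely many connected components. -/
def FSimpleAt {X : Type u} [TopologicalSpace X] (U : Set X) (p : X) : Prop :=
  ∀ V : Set X, IsOpen V → p ∈ V → ∃ W : Set X, IsOpen W ∧ p ∈ W ∧ W ⊆ V ∧
    {C : Set X | ∃ z ∈ W ∩ U, C = connectedComponentIn (W ∩ U) z}.Finite

/-- f-rim-simple: f-simple at every boundary point. -/
def FRimSimple {X : Type u} [TopologicalSpace X] (U : Set X) : Prop :=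
  ∀ p ∈ closure U \ U, FSimpleAt U p

/-- cov(ℳ): least cardinality of a family of nowhere dense subsets of ℝ covering ℝ. -/
noncomputable def covMeager : Cardinal :=
  sInf {c : Cardinal | ∃ (ι : Type) (F : ι → Set ℝ),
    Cardinal.mk ι = c ∧ (∀ i, IsNowhereDense (F i)) ∧ ⋃ i, F i = Set.univ}

/-- A locally compact first countable S-space: Hausdorff, regular, locally compact,
first countable, hereditarily separable, not Lindelöf. -/
def IsLCFCSSpace (S : Type) [TopologicalSpace S] : Prop :=
  T2Space S ∧ RegularSpace S ∧ LocallyCompactSpace S ∧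
    FirstCountableTopology S ∧ (∀ A : Set S, SeparableSpace A) ∧ ¬ LindelofSpace S

/-!
Inseparable points have the same image under every continuous map to a Hausdorff space. So if `U` is
weakly sorted through `f : closure U → H`, then `NH(w) ∩ U` lies in a single fiber of `f`, and hence
is finite, for every point `w`. A continuous `h` injective on `{x} ∪ NH(x)` maps `h⁻¹(U) ∩ NH(x)`
injectively into the finite Hausdorff space `NH(h x) ∩ U`, so `h⁻¹(U) ∩ NH(x)` is discrete. If
`h y = x ∈ U`, this set is a neighborhood of `y` in `NH(x)`.
-/

theorem discreteTopology_of_forall_exists_isOpen {X : Type*} [TopologicalSpace X] {S : Set X}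
    (hS : ∀ y ∈ S, ∃ V, IsOpen V ∧ y ∈ V ∧ DiscreteTopology ↥(V ∩ S)) : DiscreteTopology S := by
  rw [discreteTopology_subtype_iff']
  intro y hy
  obtain ⟨V, hV, hyV, hVS⟩ := hS y hy
  obtain ⟨W, hW, hWy⟩ := discreteTopology_subtype_iff'.1 hVS y ⟨hyV, hy⟩
  exact ⟨W ∩ V, hW.inter hV, by rw [inter_assoc, hWy]⟩

section Bump

variable {X Y : Type*} [TopologicalSpace X] [TopologicalSpace Y] {x y : X}

theorem Bump.symm (hxy : Bump x y) : Bump y x :=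
  ⟨hxy.1.symm, fun V W hV hW hy hx => inter_comm W V ▸ hxy.2 W V hW hV hx hy⟩

theorem Bump.mem_closure {U : Set X} (hxy : Bump x y) (hU : IsOpen U) (hx : x ∈ U) :
    y ∈ closure U :=
  mem_closure_iff.2 fun V hV hy => hxy.symm.2 V U hV hU hy hx

theorem Bump.map {h : X → Y} (hxy : Bump x y) (hh : Continuous h) (hne : h x ≠ h y) :
    Bump (h x) (h y) := by
  refine ⟨hne, fun V W hV hW hx hy => ?_⟩
  obtain ⟨z, hzV, hzW⟩ := hxy.2 _ _ (hV.preimage hh) (hW.preimage hh) hx hy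
  exact ⟨h z, hzV, hzW⟩

theorem Bump.map_eq [T2Space Y] {f : X → Y} (hxy : Bump x y) (hf : Continuous f) : f x = f y := by
  by_contra hne
  obtain ⟨V, W, hV, hW, hxV, hyW, hVW⟩ := t2_separation hne
  exact not_disjoint_iff_nonempty_inter.2 ((hxy.map hf hne).2 V W hV hW hxV hyW) hVW

theorem Bump.subtype {s : Set X} {a b : s} (hab : Bump (a : X) b) (hs : s ∈ 𝓝 (a : X)) :
    Bump a b := by
  refine ⟨fun h => hab.1 (congrArg Subtype.val h), ?_⟩
  rintro _ _ ⟨V, hV, rfl⟩ ⟨W, hW, rfl⟩ haV hbW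
  obtain ⟨z, ⟨hzV, hzs⟩, hzW⟩ := hab.2 (V ∩ interior s) W (hV.inter isOpen_interior) hW
    ⟨haV, mem_interior_iff_mem_nhds.2 hs⟩ hbW
  exact ⟨⟨z, interior_subset hzs⟩, hzV, hzW⟩

theorem mem_NHpt : y ∈ NHpt x ↔ Bump y x := by
  simp only [NHpt, NH, mem_singleton_iff, exists_eq_left, mem_ofPred_eq]

theorem mapsTo_NHpt {h : X → Y} (hh : Continuous h) (hinj : InjOn h (insert x (NHpt x))) :
    MapsTo h (NHpt x) (NHpt (h x)) := by
  intro y hy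
  have hyx : Bump y x := mem_NHpt.1 hy
  have hne : h y ≠ h x := hinj.ne (mem_insert_of_mem x hy) (mem_insert x _) hyx.1
  exact mem_NHpt.2 (hyx.map hh hne)

end Bump

section IsWeaklySorted

variable {X Y : Type*} [TopologicalSpace X] [TopologicalSpace Y] {U : Set Y}

theorem IsWeaklySorted.finite_inter_NHpt (hU : IsOpen U) (hUws : IsWeaklySorted U) (w : Y) :
    (U ∩ NHpt w).Finite := by
  obtain ⟨H, _, f, _, hf, hfin⟩ := hUws
  rcases (U ∩ NHpt w).eq_empty_or_nonempty with hempty | ⟨z₀, hz₀U, hz₀⟩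
  · exact hempty ▸ finite_empty
  have hw : w ∈ closure U := (mem_NHpt.1 hz₀).mem_closure hU hz₀U
  refine ((hfin (f ⟨w, hw⟩)).image Subtype.val).subset ?_
  rintro z ⟨hzU, hz⟩
  have hUz : closure U ∈ 𝓝 z := Filter.mem_of_superset (hU.mem_nhds hzU) subset_closure
  have hbump : Bump (⟨z, subset_closure hzU⟩ : closure U) ⟨w, hw⟩ :=
    Bump.subtype (mem_NHpt.1 hz) hUz
  exact ⟨_, ⟨hzU, hbump.map_eq hf⟩, rfl⟩

theorem IsWeaklySorted.discreteTopology_preimage_inter_NHpt [T1Space U] (hU : IsOpen U)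
    (hUws : IsWeaklySorted U) {x : X} {h : X → Y} (hh : Continuous h)
    (hinj : InjOn h (insert x (NHpt x))) : DiscreteTopology ↥(h ⁻¹' U ∩ NHpt x) := by
  have hinj' : InjOn h (h ⁻¹' U ∩ NHpt x) :=
    hinj.mono (inter_subset_right.trans (subset_insert x _))
  have hmaps : MapsTo h (h ⁻¹' U ∩ NHpt x) U := fun _ hz => hz.1
  have : T1Space ↥(h ⁻¹' U ∩ NHpt x) :=
    t1Space_of_injective_of_continuous (hmaps.restrict_inj.2 hinj') (hh.restrict hmaps)
  have hmaps' : MapsTo h (h ⁻¹' U ∩ NHpt x) (U ∩ NHpt (h x)) :=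
    fun _ hz => ⟨hz.1, mapsTo_NHpt hh hinj hz.2⟩
  have : Finite ↥(h ⁻¹' U ∩ NHpt x) :=
    (Finite.of_injOn hmaps' hinj' (hUws.finite_inter_NHpt hU (h x))).to_subtype
  infer_instance

end IsWeaklySorted

theorem stmt6_general {X Y : Type*} [TopologicalSpace X] [TopologicalSpace Y] {x : X} {U : Set Y}
    [T1Space U] (hU : IsOpen U) (hUws : IsWeaklySorted U)
    (hmap : ∀ y ∈ NHpt x, ∃ h : X → Y, Continuous h ∧ h y ∈ U ∧ InjOn h (insert x (NHpt x))) :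
    DiscreteTopology (NHpt x) := by
  refine discreteTopology_of_forall_exists_isOpen fun y hy => ?_
  obtain ⟨h, hh, hyU, hinj⟩ := hmap y hy
  exact ⟨h ⁻¹' U, hU.preimage hh, hyU, hUws.discreteTopology_preimage_inter_NHpt hU hh hinj⟩

/-- If `x` lies in a weakly sorted open Hausdorff set and each
`y ∈ NH(x)` can be mapped to `x` by a continuous self-map injective on
`{x} ∪ NH(x)`, then `NH(x)` is discrete. -/
theorem stmt6 {M : Type u} [TopologicalSpace M] (n : ℕ) (hM : IsNManifold M n)
    (x : M) (U : Set M) (hUopen : IsOpen U) (hUT2 : T2Space U)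
    (hUws : IsWeaklySorted U) (hxU : x ∈ U)
    (hhom : ∀ y ∈ NHpt x, ∃ h : M → M, Continuous h ∧ h y = x ∧
      Set.InjOn h (insert x (NHpt x))) :
    DiscreteTopology (NHpt x) :=
  stmt6_general hUopen hUws fun y hy =>
    let ⟨h, hh, hyx, hinj⟩ := hhom y hy
    ⟨h, hh, hyx ▸ hxU, hinj⟩
end

section
/- Let X be a Fréchet–Urysohn, locally Hausdorff space and let K ⊆ X be quasi-countably compact. Then NH(K) is closed in X. If moreover NH(K) ∩ K = ∅, then NH(K) is nowhere dense in X. -/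
open Set Topology TopologicalSpace

universe u

/-!
Inseparability of `x` and `y` means that `(x, y)` lies in the closure of the diagonal but not on
the diagonal. Local Hausdorffness makes the diagonal open in its closure, so `⋈` is a closed subset
of `X × X`. `NH K` is the projection to `X` of the part of `⋈` lying over `K`, and projecting along
a countably compact set into a sequential space preserves closedness.

If `y ⋈ x` then every open set containing `y` has `x` in its closure. Hence, if `closure (NH K)` has
an interior point, it contains a point of `K`.
-/

open Filter

section Bump

variable {X : Type*} [TopologicalSpace X] {U A : Set X} {x y : X}

theorem bump_iff_not_disjoint_nhds : Bump x y ↔ x ≠ y ∧ ¬Disjoint (𝓝 x) (𝓝 y) := by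
  simp only [Bump, (nhds_basis_opens x).disjoint_iff (nhds_basis_opens y), not_exists, not_and,
    not_disjoint_iff_nonempty_inter]
  grind

theorem Bump.mem_closure_of_isOpen (hxy : Bump x y) (hU : IsOpen U) (hx : x ∈ U) :
    y ∈ closure U :=
  mem_closure_iff.2 fun V hV hy ↦ inter_comm U V ▸ hxy.2 U V hU hV hx hy

theorem not_bump_of_isOpen_of_t2Space (hU : IsOpen U) [T2Space U] (hx : x ∈ U) (hy : y ∈ U) :
    ¬Bump x y := by
  rw [bump_iff_not_disjoint_nhds, not_and_not_right]
  intro hne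
  have hdisj : Disjoint (𝓝 (⟨x, hx⟩ : U)) (𝓝 ⟨y, hy⟩) := disjoint_nhds_nhds.2 (by simpa using hne)
  simpa only [hU.isOpenEmbedding_subtypeVal.map_nhds_eq] using
    (disjoint_map Subtype.val_injective).2 hdisj

theorem LocallyHausdorff.isClosed_setOf_bump (hX : LocallyHausdorff X) :
    IsClosed {p : X × X | Bump p.1 p.2} := by
  rw [← isOpen_compl_iff, isOpen_iff_mem_nhds]
  rintro ⟨x, y⟩ hxy
  obtain rfl | hne := eq_or_ne x y
  · obtain ⟨U, hU, hxU, _⟩ := hX x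
    filter_upwards [(hU.prod hU).mem_nhds ⟨hxU, hxU⟩] with p hp
    exact not_bump_of_isOpen_of_t2Space hU hp.1 hp.2
  · have hdisj : Disjoint (𝓝 x) (𝓝 y) := by
      by_contra hmeet
      exact hxy (bump_iff_not_disjoint_nhds.2 ⟨hne, hmeet⟩)
    filter_upwards [isOpen_setOfPred_disjoint_nhds_nhds.mem_nhds hdisj] with p hp hbump
    exact (bump_iff_not_disjoint_nhds.1 hbump).2 hp

theorem NH_eq_image_fst (A : Set X) :
    NH A = Prod.fst '' ({p : X × X | Bump p.1 p.2} ∩ Prod.snd ⁻¹' A) := by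
  ext y
  simp [NH, and_comm]

theorem isNowhereDense_NH_of_disjoint_closure (hA : Disjoint (closure (NH A)) A) :
    IsNowhereDense (NH A) := by
  refine not_nonempty_iff_eq_empty.1 fun ⟨z, hz⟩ ↦ ?_
  obtain ⟨y, hy, x, hxA, hyx⟩ := mem_closure_iff.1 (interior_subset hz) _ isOpen_interior hz
  have hx : x ∈ closure (NH A) :=
    closure_minimal interior_subset isClosed_closure (hyx.mem_closure_of_isOpen isOpen_interior hy)
  exact disjoint_left.1 hA hx hxA

end Bump

section CountablyCompact

variable {X Y : Type*} [TopologicalSpace X] [TopologicalSpace Y]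

theorem quasiCountablyCompact_iff_isCountablyCompact {K : Set X} :
    QuasiCountablyCompact K ↔ IsCountablyCompact K :=
  isCountablyCompact_iff_countable_open_cover.symm

theorem mapClusterPt_prodMk_of_tendsto {ι : Type*} {l : Filter ι} {f : ι → X} {g : ι → Y}
    {x : X} {y : Y} (hf : Tendsto f l (𝓝 x)) (hg : MapClusterPt y l g) :
    MapClusterPt (x, y) l fun i ↦ (f i, g i) := by
  rw [((nhds_basis_opens x).prod_nhds (nhds_basis_opens y)).mapClusterPt_iff_frequently]
  rintro ⟨U, V⟩ ⟨⟨hxU, hU⟩, hyV, hV⟩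
  exact ((hg.frequently (hV.mem_nhds hyV)).and_eventually (hf (hU.mem_nhds hxU))).mono
    fun _ hi ↦ ⟨hi.2, hi.1⟩

theorem isClosed_image_fst_of_isCountablyCompact [SequentialSpace X] {C : Set (X × Y)} {K : Set Y}
    (hC : IsClosed C) (hK : IsCountablyCompact K) :
    IsClosed (Prod.fst '' (C ∩ Prod.snd ⁻¹' K)) := by
  refine IsSeqClosed.isClosed fun u x hu hux ↦ ?_
  choose p hpCK hpu using hu
  obtain ⟨y, hyK, hy⟩ := hK.seq_clusterPt (fun n ↦ (p n).2) (.of_forall fun n ↦ (hpCK n).2)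
  have hfst : Tendsto (fun n ↦ (p n).1) atTop (𝓝 x) := by simpa only [hpu] using hux
  have hxy : MapClusterPt (x, y) atTop p := mapClusterPt_prodMk_of_tendsto hfst hy
  exact ⟨(x, y), ⟨hC.mem_of_mapClusterPt hxy (.of_forall fun n ↦ (hpCK n).1), hyK⟩, rfl⟩

end CountablyCompact

theorem LocallyHausdorff.isClosed_NH {X : Type*} [TopologicalSpace X] [SequentialSpace X]
    (hX : LocallyHausdorff X) {K : Set X} (hK : QuasiCountablyCompact K) : IsClosed (NH K) := by
  rw [NH_eq_image_fst]
  exact isClosed_image_fst_of_isCountablyCompact hX.isClosed_setOf_bump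
    (quasiCountablyCompact_iff_isCountablyCompact.1 hK)

theorem stmt12_general {X : Type*} [TopologicalSpace X] [SequentialSpace X]
    (hLH : LocallyHausdorff X) (K : Set X) (hK : QuasiCountablyCompact K) :
    IsClosed (NH K) ∧ (NH K ∩ K = ∅ → IsNowhereDense (NH K)) := by
  have hclosed : IsClosed (NH K) := hLH.isClosed_NH hK
  refine ⟨hclosed, fun hdisj ↦ isNowhereDense_NH_of_disjoint_closure ?_⟩
  rwa [hclosed.closure_eq, disjoint_iff_inter_eq_empty]

/-- In a Fréchet–Urysohn locally Hausdorff space, `NH(K)` is closed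
for quasi-countably compact `K`; if moreover `NH(K) ∩ K = ∅` then `NH(K)` is
nowhere dense. -/
theorem stmt12 {X : Type u} [TopologicalSpace X] [FrechetUrysohnSpace X]
    (hLH : LocallyHausdorff X) (K : Set X) (hK : QuasiCountablyCompact K) :
    IsClosed (NH K) ∧ (NH K ∩ K = ∅ → IsNowhereDense (NH K)) :=
  stmt12_general hLH K hK
end
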